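/- For fixed n, the expected number of calls to complete an (n,m)-Bingo card is a linear function of m: there exist real numbers a_n = n·(1 − S_n) and b_n = 1 − S_n, depending only on n (in particular independent of m and of the chosen card), such that for every m ≥ n and every (n,m)-Bingo card, E[B] = a_n·m + b_n. -/

import Mathlib

open Finset

/-- The row of an `n × n` Bingo board through index `i`. -/
def bingoRow (n : ℕ) (i : Fin n) : Finset (Fin n × Fin n) :=
  Finset.univ.filter (fun s => s.1 = i)

/-- The column of an `n × n` Bingo board through index `j`. -/
def bingoCol (n : ℕ) (j : Fin n) : Finset (Fin n × Fin n) :=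
  Finset.univ.filter (fun s => s.2 = j)

/-- The main diagonal `{(i,i)}`. -/
def bingoDiag (n : ℕ) : Finset (Fin n × Fin n) :=
  Finset.univ.filter (fun s => (s.2 : ℕ) = (s.1 : ℕ))

/-- The anti-diagonal `{(i, n-1-i)}`. -/
def bingoAntiDiag (n : ℕ) : Finset (Fin n × Fin n) :=
  Finset.univ.filter (fun s => (s.2 : ℕ) = n - 1 - (s.1 : ℕ))

/-- The set `𝓛` of winning lines: `n` rows, `n` columns and the two diagonals. -/
def bingoLines (n : ℕ) : Finset (Finset (Fin n × Fin n)) :=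
  (Finset.univ.image (bingoRow n)) ∪ (Finset.univ.image (bingoCol n)) ∪
    {bingoDiag n, bingoAntiDiag n}

/-- An `(n,m)`-Bingo card: an injective assignment of numbers such that column `j`
only uses numbers in `[m*j, m*(j+1))`. -/
def IsBingoCard (n m : ℕ) (c : Fin n × Fin n → Fin (m * n)) : Prop :=
  Function.Injective c ∧
    ∀ i j : Fin n, m * (j : ℕ) ≤ (c (i, j) : ℕ) ∧ (c (i, j) : ℕ) < m * ((j : ℕ) + 1)

/-- Bingo is achieved within the first `k` calls of `σ`: some winning line has all of its
numbers among `σ 0, …, σ (k-1)`. -/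
def BingoWins (n m : ℕ) (c : Fin n × Fin n → Fin (m * n))
    (σ : Equiv.Perm (Fin (m * n))) (k : ℕ) : Prop :=
  ∃ L ∈ bingoLines n, ∀ s ∈ L, ∃ t : Fin (m * n), (t : ℕ) < k ∧ σ t = c s

/-- `S_n = ∑_{∅ ≠ X ⊆ 𝓛} (-1)^{|X|+1} / (m(X)+1)`, where `m(X)` is the number of squares
covered by the union of the lines in `X`. -/
noncomputable def Sn (n : ℕ) : ℝ :=
  ∑ X ∈ (bingoLines n).powerset.filter (fun X => X.Nonempty),
    (-1 : ℝ) ^ (X.card + 1) / (((X.sup id).card : ℝ) + 1)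

/-! Writing `N` for the number of calls, `N + 1 - B` counts the times `k ≤ N` at which some line is
complete. Inclusion–exclusion over the lines turns this count into an alternating sum of the number
of times at which a given set `A` of numbers has been called entirely. Only the size of `A` matters
on average: by symmetry `A` is called by time `k` with probability `k.choose #A / N.choose #A`, and
the hockey-stick identity sums these to `(N + 1) / (#A + 1)`. The factor `N + 1` comes out of the
alternating sum, leaving `E[N + 1 - B] = (N + 1) * S`, and `N = m * n` is linear in `m`. -/

section SubsetSMul

open scoped Pointwise

open Equiv (Perm)

variable {α : Type*} [DecidableEq α] [Fintype α]

theorem card_perm_subset_smul_congr {A A' : Finset α} (h : #A = #A') (T : Finset α) :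
    #{σ : Perm α | A ⊆ σ • T} = #{σ : Perm α | A' ⊆ σ • T} := by
  have := Set.powersetCard.isPretransitive (α := α) (n := #A')
  obtain ⟨τ, hτ⟩ := MulAction.exists_smul_eq (Perm α)
    (Set.powersetCard.ofCard h) (Set.powersetCard.ofCard (rfl : #A' = #A'))
  obtain rfl : τ • A = A' := congrArg Subtype.val hτ
  exact card_equiv (Equiv.mulLeft τ) fun σ => by simp [mul_smul]

theorem card_perm_subset_smul_mul_choose (A T : Finset α) :
    #{σ : Perm α | A ⊆ σ • T} * (Fintype.card α).choose #A =
      (Fintype.card α).factorial * (#T).choose #A := by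
  calc #{σ : Perm α | A ⊆ σ • T} * (Fintype.card α).choose #A
      = ∑ A' ∈ powersetCard #A univ, #{σ : Perm α | A' ⊆ σ • T} := by
        rw [sum_congr rfl fun A' hA' =>
          card_perm_subset_smul_congr (mem_powersetCard.1 hA').2 T]
        simp [mul_comm]
    _ = ∑ σ : Perm α, #{A' ∈ powersetCard #A univ | A' ⊆ σ • T} :=
        sum_card_bipartiteAbove_eq_sum_card_bipartiteBelow fun A' σ => A' ⊆ σ • T
    _ = ∑ σ : Perm α, #(powersetCard #A (σ • T)) := by
        refine sum_congr rfl fun σ _ => congrArg card ?_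
        ext A'
        simp [mem_powersetCard, and_comm]
    _ = (Fintype.card α).factorial * (#T).choose #A := by
        simp [Fintype.card_perm]

end SubsetSMul

section Calls

open scoped Pointwise

open Equiv (Perm)

variable {N : ℕ}

/-- The set of the first `k` numbers called by `σ` (all `N` numbers once `N ≤ k`). -/
def calls (σ : Perm (Fin N)) (k : ℕ) : Finset (Fin N) :=
  σ • ({t | (t : ℕ) < k} : Finset (Fin N))

theorem mem_calls {σ : Perm (Fin N)} {k : ℕ} {a : Fin N} :
    a ∈ calls σ k ↔ ∃ t : Fin N, (t : ℕ) < k ∧ σ t = a := by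
  simp [calls, mem_smul_finset]

theorem calls_mono (σ : Perm (Fin N)) : Monotone (calls σ) := fun _ _ hkl _ ha =>
  let ⟨t, ht, hta⟩ := mem_calls.1 ha
  mem_calls.2 ⟨t, ht.trans_le hkl, hta⟩

theorem calls_self (σ : Perm (Fin N)) : calls σ N = univ := by
  simp [calls]

theorem card_perm_subset_calls_mul_choose (A : Finset (Fin N)) {k : ℕ} (hk : k ≤ N) :
    #{σ : Perm (Fin N) | A ⊆ calls σ k} * N.choose #A = N.factorial * k.choose #A := by
  have h := card_perm_subset_smul_mul_choose A ({t | (t : ℕ) < k} : Finset (Fin N))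
  rwa [Fintype.card_fin, Fin.card_filter_val_lt, min_eq_right hk] at h

/-- The times `0 ≤ k ≤ N` at which every number of `A` has been called. -/
def completionTimes (σ : Perm (Fin N)) (A : Finset (Fin N)) : Finset ℕ :=
  {k ∈ range (N + 1) | A ⊆ calls σ k}

theorem mem_completionTimes {σ : Perm (Fin N)} {A : Finset (Fin N)} {k : ℕ} :
    k ∈ completionTimes σ A ↔ k ≤ N ∧ A ⊆ calls σ k := by
  simp [completionTimes]

theorem sum_card_completionTimes_mul_choose (A : Finset (Fin N)) :
    (∑ σ : Perm (Fin N), #(completionTimes σ A)) * N.choose #A =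
      N.factorial * (N + 1).choose (#A + 1) := by
  have choose_eq_zero : ∀ k ∈ range (N + 1), k ∉ Icc #A N → k.choose #A = 0 := fun k _ _ =>
    Nat.choose_eq_zero_of_lt (by grind)
  calc (∑ σ : Perm (Fin N), #(completionTimes σ A)) * N.choose #A
      = ∑ k ∈ range (N + 1), #{σ : Perm (Fin N) | A ⊆ calls σ k} * N.choose #A := by
        rw [← sum_mul]
        exact congrArg (· * _)
          (sum_card_bipartiteAbove_eq_sum_card_bipartiteBelow fun σ k => A ⊆ calls σ k)
    _ = ∑ k ∈ range (N + 1), N.factorial * k.choose #A :=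
        sum_congr rfl fun k hk =>
          card_perm_subset_calls_mul_choose A (Nat.lt_succ_iff.1 (mem_range.1 hk))
    _ = N.factorial * ∑ k ∈ Icc #A N, k.choose #A := by
        rw [← mul_sum, sum_subset (fun k => by grind) choose_eq_zero]
    _ = N.factorial * (N + 1).choose (#A + 1) := by
        rw [Nat.sum_Icc_choose]

theorem sum_card_completionTimes_mul_card_add_one (A : Finset (Fin N)) :
    (∑ σ : Perm (Fin N), #(completionTimes σ A)) * (#A + 1) = (N + 1).factorial := by
  have choose_pos : 0 < N.choose #A := Nat.choose_pos (card_finset_fin_le A)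
  apply Nat.eq_of_mul_eq_mul_right choose_pos
  rw [mul_right_comm, sum_card_completionTimes_mul_choose, mul_assoc,
    ← Nat.add_one_mul_choose_eq, Nat.factorial_succ]
  ring

end Calls

section FirstCompletion

open Equiv (Perm)

variable {ι : Type*} {N : ℕ} {s : Finset ι} {A : ι → Finset (Fin N)}

theorem inf'_completionTimes (σ : Perm (Fin N)) {X : Finset ι} (hX : X.Nonempty)
    (A : ι → Finset (Fin N)) :
    X.inf' hX (fun i => completionTimes σ (A i)) = completionTimes σ (X.sup A) := by
  ext k
  simp only [mem_inf', mem_completionTimes, Finset.sup_le_iff]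
  obtain ⟨i, hi⟩ := hX
  exact ⟨fun h => ⟨(h i hi).1, fun j hj => (h j hj).2⟩, fun h j hj => ⟨h.1, h.2 j hj⟩⟩

theorem biUnion_completionTimes {σ : Perm (Fin N)} {b : ℕ}
    (hb : IsLeast {k | ∃ i ∈ s, A i ⊆ calls σ k} b) :
    s.biUnion (fun i => completionTimes σ (A i)) = Icc b N := by
  ext k
  simp only [mem_biUnion, mem_completionTimes, mem_Icc]
  constructor
  · rintro ⟨i, hi, hkN, hik⟩
    exact ⟨hb.2 ⟨i, hi, hik⟩, hkN⟩
  · rintro ⟨hbk, hkN⟩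
    obtain ⟨i, hi, hib⟩ := hb.1
    exact ⟨i, hi, hkN, hib.trans (calls_mono σ hbk)⟩

theorem firstCompletion_le {σ : Perm (Fin N)} {b : ℕ}
    (hb : IsLeast {k | ∃ i ∈ s, A i ⊆ calls σ k} b) : b ≤ N := by
  obtain ⟨i, hi, -⟩ := hb.1
  exact hb.2 ⟨i, hi, by simp [calls_self]⟩

theorem add_one_sub_firstCompletion_eq_sum {σ : Perm (Fin N)} {b : ℕ}
    (hb : IsLeast {k | ∃ i ∈ s, A i ⊆ calls σ k} b) :
    (N : ℝ) + 1 - b = ∑ X ∈ s.powerset with X.Nonempty,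
      (-1 : ℝ) ^ (#X + 1) * #(completionTimes σ (X.sup A)) := by
  have hbN : b ≤ N + 1 := (firstCompletion_le hb).trans N.le_succ
  have inclusion_exclusion :=
    inclusion_exclusion_card_biUnion s fun i => completionTimes σ (A i)
  simp only [biUnion_completionTimes hb, Nat.card_Icc, inf'_completionTimes] at inclusion_exclusion
  rw [sum_coe_sort _ fun X : Finset ι => (-1 : ℤ) ^ (#X + 1) * #(completionTimes σ (X.sup A))]
    at inclusion_exclusion
  rw [Nat.cast_sub hbN] at inclusion_exclusion
  exact_mod_cast inclusion_exclusion

theorem sum_firstCompletion_div_factorial {B : Perm (Fin N) → ℕ}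
    (hB : ∀ σ, IsLeast {k | ∃ i ∈ s, A i ⊆ calls σ k} (B σ)) :
    (∑ σ, (B σ : ℝ)) / N.factorial =
      (N + 1) * (1 - ∑ X ∈ s.powerset with X.Nonempty,
        (-1 : ℝ) ^ (#X + 1) / (#(X.sup A) + 1)) := by
  have sum_times (C : Finset (Fin N)) :
      ∑ σ : Perm (Fin N), (#(completionTimes σ C) : ℝ) = (N + 1).factorial / (#C + 1) := by
    rw [eq_div_iff (by positivity)]
    exact_mod_cast sum_card_completionTimes_mul_card_add_one C
  have sum_complement : ∑ σ, ((N : ℝ) + 1 - B σ) = (N + 1).factorial *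
      ∑ X ∈ s.powerset with X.Nonempty, (-1 : ℝ) ^ (#X + 1) / (#(X.sup A) + 1) := by
    simp_rw [add_one_sub_firstCompletion_eq_sum (hB _)]
    rw [sum_comm, mul_sum]
    refine sum_congr rfl fun X _ => ?_
    rw [← mul_sum, sum_times]
    ring
  rw [sum_sub_distrib, sum_const, card_univ, Fintype.card_perm, Fintype.card_fin, nsmul_eq_mul,
    Nat.factorial_succ] at sum_complement
  rw [div_eq_iff (by positivity)]
  push_cast at sum_complement
  linear_combination -sum_complement

end FirstCompletion

theorem bingo_expectation_linear_in_m_general {ι : Type*} [DecidableEq ι] {N : ℕ}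
    (lines : Finset (Finset ι)) {c : ι → Fin N} (hc : Function.Injective c)
    {B : Equiv.Perm (Fin N) → ℕ}
    (hB : ∀ σ, IsLeast
      {k | ∃ L ∈ lines, ∀ s ∈ L, ∃ t : Fin N, (t : ℕ) < k ∧ σ t = c s} (B σ)) :
    (∑ σ, (B σ : ℝ)) / N.factorial =
      (N + 1) * (1 - ∑ X ∈ lines.powerset with X.Nonempty,
        (-1 : ℝ) ^ (#X + 1) / (#(X.sup id) + 1)) := by
  have card_sup_image (X : Finset (Finset ι)) : #(X.sup (image c)) = #(X.sup id) := by
    rw [← card_image_of_injective (X.sup id) hc, sup_eq_biUnion, sup_eq_biUnion, biUnion_image]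
    rfl
  simp_rw [← card_sup_image]
  refine sum_firstCompletion_div_factorial fun σ => ?_
  simpa only [image_subset_iff, mem_calls] using hB σ

theorem nonempty_of_mem_bingoLines {n : ℕ} (hn : 1 ≤ n) {L : Finset (Fin n × Fin n)}
    (hL : L ∈ bingoLines n) : L.Nonempty := by
  simp only [bingoLines, mem_union, mem_image, mem_univ, true_and, mem_insert,
    mem_singleton] at hL
  rcases hL with (⟨i, rfl⟩ | ⟨j, rfl⟩) | rfl | rfl
  · exact ⟨(i, i), by simp [bingoRow]⟩
  · exact ⟨(j, j), by simp [bingoCol]⟩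
  · exact ⟨(⟨0, hn⟩, ⟨0, hn⟩), by simp [bingoDiag]⟩
  · exact ⟨(⟨0, hn⟩, ⟨n - 1, by lia⟩), by simp [bingoAntiDiag]⟩

theorem BingoWins.one_le {n m : ℕ} (hn : 1 ≤ n) {c : Fin n × Fin n → Fin (m * n)}
    {σ : Equiv.Perm (Fin (m * n))} {k : ℕ} (h : BingoWins n m c σ k) : 1 ≤ k := by
  obtain ⟨L, hL, hcalled⟩ := h
  obtain ⟨s, hs⟩ := nonempty_of_mem_bingoLines hn hL
  obtain ⟨t, htk, -⟩ := hcalled s hs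
  exact Nat.one_le_of_lt htk

theorem setOf_one_le_and_bingoWins {n m : ℕ} (hn : 1 ≤ n) (c : Fin n × Fin n → Fin (m * n))
    (σ : Equiv.Perm (Fin (m * n))) :
    {k | 1 ≤ k ∧ BingoWins n m c σ k} = {k | BingoWins n m c σ k} :=
  Set.ext fun _ => and_iff_right_of_imp (BingoWins.one_le hn)

/-- for fixed `n`, the expected number of calls is a linear function of `m`,
with slope `n·(1 - S_n)` and intercept `1 - S_n`, independently of `m` and of the card. -/
theorem bingo_expectation_linear_in_m (n : ℕ) (hn : 1 ≤ n) :
    ∃ a b : ℝ, a = (n : ℝ) * (1 - Sn n) ∧ b = 1 - Sn n ∧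
      ∀ m : ℕ, n ≤ m →
        ∀ c : Fin n × Fin n → Fin (m * n), IsBingoCard n m c →
          ∀ B : Equiv.Perm (Fin (m * n)) → ℕ,
            (∀ σ, IsLeast {k : ℕ | 1 ≤ k ∧ BingoWins n m c σ k} (B σ)) →
              (∑ σ : Equiv.Perm (Fin (m * n)), (B σ : ℝ)) / (Nat.factorial (m * n)) =
                a * (m : ℝ) + b := by
  refine ⟨_, _, rfl, rfl, fun m _ c hc B hB => ?_⟩
  simp_rw [setOf_one_le_and_bingoWins hn] at hB
  rw [bingo_expectation_linear_in_m_general (bingoLines n) hc.1 hB, Sn]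
  push_cast
  ring
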